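/- Let V be a vertex operator algebra with V = ⊕_{n≥0} V_{(n)} and V_{(0)} = ℂ1, and let U be a graded subspace of ⊕_{n≥1} V_{(n)} such that V is linearly spanned by 1 together with elements u¹_{−n₁}···uʳ_{−n_r}1 with uⁱ ∈ U and n₁,…,n_r ≥ 1. Let W be a weak V-module and α ∈ W*. If for every u ∈ U there exists k ∈ ℤ such that ⟨α, u_m w⟩ = 0 for all w ∈ W whenever m ≤ k, then α ∈ D(W). -/

import Mathlib

noncomputable section

/-- The generalized binomial coefficient `C(m, i)` for `m ∈ ℤ`, `i ∈ ℕ`,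
as a complex number: `m(m-1)⋯(m-i+1)/i!`. -/
def cchoose (m : ℤ) (i : ℕ) : ℂ :=
  (∏ j ∈ Finset.range i, ((m : ℂ) - (j : ℂ))) / (Nat.factorial i : ℂ)

/-- A vertex operator algebra `V = ⊕ₙ V₍ₙ₎` over `ℂ`.  The vertex operator map is
recorded through its modes `op u n v = uₙ v` (so `Y(u,x)v = Σₙ uₙv x^{-n-1}`), with
vacuum `one`, conformal vector `omega` (with `L(k) = ω_{k+1}`), central charge `cc`,
weight grading `wtSpace` with projections `proj`.  The Jacobi identity is recorded in
the equivalent form of the Borcherds identity on modes. -/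
structure VOA where
  carrier : Type
  [grp : AddCommGroup carrier]
  [mdl : Module ℂ carrier]
  op : carrier → ℤ → carrier → carrier
  one : carrier
  omega : carrier
  wtSpace : ℤ → Submodule ℂ carrier
  proj : ℤ → carrier → carrier
  cc : ℂ
  op_linear_left : ∀ (n : ℤ) (w : carrier), IsLinearMap ℂ fun u => op u n w
  op_linear_right : ∀ (u : carrier) (n : ℤ), IsLinearMap ℂ (op u n)
  trunc : ∀ u v : carrier, ∃ N : ℤ, ∀ n : ℤ, N ≤ n → op u n v = 0
  one_op : ∀ (n : ℤ) (v : carrier), op one n v = if n = -1 then v else 0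
  create_nonneg : ∀ (v : carrier) (n : ℤ), 0 ≤ n → op v n one = 0
  create : ∀ v : carrier, op v (-1) one = v
  borcherds : ∀ (u v w : carrier) (l m n : ℤ),
    (∑ᶠ i : ℕ, cchoose m i • op (op u (l + (i : ℤ)) v) (m + n - (i : ℤ)) w)
      = ∑ᶠ i : ℕ, ((-1 : ℂ) ^ i * cchoose l i) •
          (op u (l + m - (i : ℤ)) (op v (n + (i : ℤ)) w)
            - ((-1 : ℂ) ^ l) • op v (l + n - (i : ℤ)) (op u (m + (i : ℤ)) w))
  proj_linear : ∀ n : ℤ, IsLinearMap ℂ (proj n)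
  proj_mem : ∀ (n : ℤ) (v : carrier), proj n v ∈ wtSpace n
  proj_eq : ∀ n : ℤ, ∀ v ∈ wtSpace n, proj n v = v
  proj_ne : ∀ m n : ℤ, m ≠ n → ∀ v ∈ wtSpace m, proj n v = 0
  proj_finite : ∀ v : carrier, (Function.support fun n => proj n v).Finite
  proj_sum : ∀ v : carrier, (∑ᶠ n : ℤ, proj n v) = v
  fd : ∀ n : ℤ, FiniteDimensional ℂ (wtSpace n)
  lower_trunc : ∃ N : ℤ, ∀ n : ℤ, n < N → wtSpace n = ⊥
  one_wt : one ∈ wtSpace 0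
  omega_wt : omega ∈ wtSpace 2
  op_wt : ∀ k m n : ℤ, ∀ u ∈ wtSpace k, ∀ v ∈ wtSpace m, op u n v ∈ wtSpace (k + m - n - 1)
  L_zero : ∀ n : ℤ, ∀ v ∈ wtSpace n, op omega 1 v = (n : ℂ) • v
  L_neg_one : ∀ (u : carrier) (n : ℤ) (w : carrier),
    op (op omega 0 u) n w = (-(n : ℂ)) • op u (n - 1) w
  virasoro : ∀ (m n : ℤ) (v : carrier),
    op omega (m + 1) (op omega (n + 1) v) - op omega (n + 1) (op omega (m + 1) v)
      = ((m : ℂ) - (n : ℂ)) • op omega (m + n + 1) v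
        + (if m + n = 0 then (((m : ℂ) ^ 3 - (m : ℂ)) / 12) * cc else 0) • v

attribute [instance] VOA.grp VOA.mdl

namespace VOA

variable (V : VOA)

/-- The Virasoro operator `L(k) = ω_{k+1}`. -/
def L (k : ℤ) (v : V.carrier) : V.carrier := V.op V.omega (k + 1) v

/-- The positive-weight part `V₊ = ⊕_{n ≥ 1} V₍ₙ₎`. -/
def pos : Submodule ℂ V.carrier := ⨆ (n : ℤ) (_ : 1 ≤ n), V.wtSpace n

/-- Zhu's subspace `C₂(V) = span{u₋₂v : u, v ∈ V}`. -/
def C2 : Submodule ℂ V.carrier :=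
  Submodule.span ℂ {x : V.carrier | ∃ u v : V.carrier, x = V.op u (-2) v}

/-- The subspace `C₁(V) = span(v₋₁V₊ (v ∈ V₊) together with L(-1)V)`. -/
def C1 : Submodule ℂ V.carrier :=
  Submodule.span ℂ
    ({x : V.carrier | ∃ u ∈ V.pos, ∃ v ∈ V.pos, x = V.op u (-1) v}
      ∪ {x : V.carrier | ∃ v : V.carrier, x = V.op V.omega 0 v})

/-- Iterated application of modes: `iterApply [(u¹,n₁),…,(uʳ,n_r)] w = u¹_{n₁} ⋯ uʳ_{n_r} w`. -/
def iterApply : List (V.carrier × ℤ) → V.carrier → V.carrier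
  | [], w => w
  | p :: l, w => V.op p.1 p.2 (iterApply l w)

/-- `U ⊆ V` generates `V` as a vertex operator algebra:  `V` is linearly spanned by
the elements `u¹_{n₁} ⋯ uʳ_{n_r} 1` with `uⁱ ∈ U`, `n_i ∈ ℤ`. -/
def generates (U : Set V.carrier) : Prop :=
  Submodule.span ℂ {x : V.carrier | ∃ l : List (V.carrier × ℤ),
    (∀ p ∈ l, p.1 ∈ U) ∧ x = V.iterApply l V.one} = ⊤

/-- `V` is finitely generated as a vertex operator algebra. -/
def FinitelyGenerated : Prop := ∃ S : Finset V.carrier, V.generates ↑S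

end VOA

/-- A weak `V`-module: all axioms of a module (truncation, vacuum, Jacobi identity in
Borcherds form) except those involving gradings. -/
structure WeakModule (V : VOA) where
  carrier : Type
  [grp : AddCommGroup carrier]
  [mdl : Module ℂ carrier]
  op : V.carrier → ℤ → carrier → carrier
  op_linear_left : ∀ (n : ℤ) (w : carrier), IsLinearMap ℂ fun u => op u n w
  op_linear_right : ∀ (u : V.carrier) (n : ℤ), IsLinearMap ℂ (op u n)
  trunc : ∀ (u : V.carrier) (w : carrier), ∃ N : ℤ, ∀ n : ℤ, N ≤ n → op u n w = 0
  one_op : ∀ (n : ℤ) (w : carrier), op V.one n w = if n = -1 then w else 0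
  borcherds : ∀ (u v : V.carrier) (w : carrier) (l m n : ℤ),
    (∑ᶠ i : ℕ, cchoose m i • op (V.op u (l + (i : ℤ)) v) (m + n - (i : ℤ)) w)
      = ∑ᶠ i : ℕ, ((-1 : ℂ) ^ i * cchoose l i) •
          (op u (l + m - (i : ℤ)) (op v (n + (i : ℤ)) w)
            - ((-1 : ℂ) ^ l) • op v (l + n - (i : ℤ)) (op u (m + (i : ℤ)) w))

attribute [instance] WeakModule.grp WeakModule.mdl

namespace WeakModule

variable {V : VOA} (W : WeakModule V)

/-- `L(0)` acting on a weak module, as a linear map. -/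
def L0 : W.carrier →ₗ[ℂ] W.carrier := IsLinearMap.mk' _ (W.op_linear_right V.omega 1)

/-- The `L(0)`-eigenspace of eigenvalue `h`. -/
def eig (h : ℂ) : Submodule ℂ W.carrier :=
  LinearMap.ker (W.L0 - h • (LinearMap.id : W.carrier →ₗ[ℂ] W.carrier))

/-- The coefficient `v*ₙ` of the adjoint vertex operator
`⟨Y*(v,x)α, w⟩ = ⟨α, Y(e^{xL(1)}(-x^{-2})^{L(0)}v, x^{-1})w⟩` acting on the full dual
space: for `v` homogeneous of weight `h`,
`(v*ₙ α)(w) = (-1)^h Σ_{i≥0} (1/i!) α((L(1)^i v)_{2h-n-i-2} w)`, extended to general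
`v` via the weight-space projections. -/
def dmode (v : V.carrier) (n : ℤ) (α : W.carrier → ℂ) (w : W.carrier) : ℂ :=
  ∑ᶠ h : ℤ, ∑ᶠ i : ℕ,
    ((-1 : ℂ) ^ h / (Nat.factorial i : ℂ)) *
      α (W.op ((V.L 1)^[i] (V.proj h v)) (2 * h - n - (i : ℤ) - 2) w)

/-- `D(W) ⊆ W*`: the linear functionals `α` on `W` such that for every `v ∈ V`,
`Y*(v,x)α ∈ W*((x))`, i.e. `v*ₙ α = 0` for `n` sufficiently large. -/
def DW : Set (W.carrier → ℂ) :=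
  {α | IsLinearMap ℂ α ∧
    ∀ v : V.carrier, ∃ N : ℤ, ∀ n : ℤ, N ≤ n → ∀ w : W.carrier, W.dmode v n α w = 0}

/-- A subspace stable under all modes of all vertex operators, i.e. a `V`-submodule. -/
def IsStable (S : Submodule ℂ W.carrier) : Prop :=
  ∀ (v : V.carrier) (n : ℤ), ∀ m ∈ S, W.op v n m ∈ S

/-- An irreducible (nonzero, no proper nonzero stable subspaces) `V`-submodule. -/
def IsIrreducibleSub (S : Submodule ℂ W.carrier) : Prop :=
  S ≠ ⊥ ∧ W.IsStable S ∧
    ∀ T : Submodule ℂ W.carrier, W.IsStable T → T ≤ S → T = ⊥ ∨ T = S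

/-- A stable subspace which is an ordinary module: `L(0)` acts semisimply on it with
finite-dimensional eigenspaces, and for each `h` the eigenvalues `h + m` do not occur
for `m` a sufficiently negative integer. -/
def IsOrdinarySub (S : Submodule ℂ W.carrier) : Prop :=
  S ≤ (⨆ h : ℂ, W.eig h ⊓ S) ∧ (∀ h : ℂ, FiniteDimensional ℂ ↥(W.eig h ⊓ S)) ∧
    ∀ h : ℂ, ∃ N : ℤ, ∀ m : ℤ, m ≤ N → W.eig (h + (m : ℂ)) ⊓ S = ⊥

/-- The weak module `W` is irreducible. -/
def IsIrreducible : Prop :=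
  (⊥ : Submodule ℂ W.carrier) ≠ ⊤ ∧
    ∀ S : Submodule ℂ W.carrier, W.IsStable S → S = ⊥ ∨ S = ⊤

/-- `Cₙ(W) = span{v₋ₙw : v ∈ V, w ∈ W}`. -/
def Cn (n : ℤ) : Submodule ℂ W.carrier :=
  Submodule.span ℂ {x : W.carrier | ∃ (v : V.carrier) (w : W.carrier), x = W.op v (-n) w}

/-- `B(W) = span(u₋₁W (u ∈ V₊) together with v₀W (v homogeneous, wt v ≥ 2))`. -/
def BW : Submodule ℂ W.carrier :=
  Submodule.span ℂ
    ({x : W.carrier | ∃ v ∈ V.pos, ∃ w : W.carrier, x = W.op v (-1) w}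
      ∪ {x : W.carrier | ∃ k : ℤ, 2 ≤ k ∧ ∃ v ∈ V.wtSpace k, ∃ w : W.carrier, x = W.op v 0 w})

/-- Zhu's subspace `O(W) = span{Σ_{i≥0} C(wt v, i) v_{i-2} w}` so that `A(W) = W/O(W)`. -/
def OW : Submodule ℂ W.carrier :=
  Submodule.span ℂ
    {x : W.carrier | ∃ (k : ℤ) (v : V.carrier), v ∈ V.wtSpace k ∧
      ∃ w : W.carrier, x = ∑ᶠ i : ℕ, cchoose k i • W.op v ((i : ℤ) - 2) w}

/-- A subspace `T ⊇ O(W)` of `W` is closed under the Frenkel–Zhu left and right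
`A(V)`-actions `v * w = Σᵢ C(wt v, i) v_{i-1} w` and `w * v = Σᵢ C(wt v - 1, i) v_{i-1} w`;
for `T ⊇ O(W)` this expresses that `T/O(W)` is an `A(V)`-sub-bimodule of `A(W)`. -/
def BimoduleClosed (T : Submodule ℂ W.carrier) : Prop :=
  ∀ k : ℤ, ∀ v ∈ V.wtSpace k, ∀ w ∈ T,
    (∑ᶠ i : ℕ, cchoose k i • W.op v ((i : ℤ) - 1) w) ∈ T ∧
    (∑ᶠ i : ℕ, cchoose (k - 1) i • W.op v ((i : ℤ) - 1) w) ∈ T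

/-- Equivalence (isomorphism) of weak modules. -/
def Equiv (M N : WeakModule V) : Prop :=
  ∃ e : M.carrier ≃ₗ[ℂ] N.carrier,
    ∀ (v : V.carrier) (n : ℤ) (w : M.carrier), e (M.op v n w) = N.op v n (e w)

end WeakModule

/-- `V` is of class 𝒜: `L(0)` acts semisimply on every weak `V`-module. -/
def VOA.classA (V : VOA) : Prop :=
  ∀ M : WeakModule V, (⨆ h : ℂ, M.eig h) = ⊤

/-- `V` is regular: every weak `V`-module is a direct sum of irreducible ordinary
`V`-modules. -/
def VOA.regular (V : VOA) : Prop :=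
  ∀ M : WeakModule V, ∃ (ι : Type) (S : ι → Submodule ℂ M.carrier),
    (∀ i, M.IsIrreducibleSub (S i) ∧ M.IsOrdinarySub (S i)) ∧
    (∀ i, Disjoint (S i) (⨆ (j : ι) (_ : j ≠ i), S j)) ∧ (⨆ i, S i) = ⊤

/-- A generalized `V`-module: a weak module with a semisimple `L(0)`-action, graded by
the `L(0)`-eigenvalues, with weight-space projections `projW`. -/
structure GenModule (V : VOA) extends WeakModule V where
  wt : ℂ → Submodule ℂ carrier
  projW : ℂ → carrier → carrier
  projW_linear : ∀ h : ℂ, IsLinearMap ℂ (projW h)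
  projW_mem : ∀ (h : ℂ) (w : carrier), projW h w ∈ wt h
  projW_eq : ∀ h : ℂ, ∀ w ∈ wt h, projW h w = w
  projW_ne : ∀ g h : ℂ, g ≠ h → ∀ w ∈ wt g, projW h w = 0
  projW_finite : ∀ w : carrier, (Function.support fun h => projW h w).Finite
  projW_sum : ∀ w : carrier, (∑ᶠ h : ℂ, projW h w) = w
  wt_L0 : ∀ h : ℂ, ∀ w ∈ wt h, op V.omega 1 w = h • w
  wt_op : ∀ k : ℤ, ∀ v ∈ V.wtSpace k, ∀ (h : ℂ) (n : ℤ), ∀ w ∈ wt h,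
    op v n w ∈ wt (h + (k : ℂ) - (n : ℂ) - 1)

/-- An ordinary `V`-module: a generalized module whose weight spaces are
finite-dimensional and whose weights are truncated from below in each coset `h + ℤ`. -/
structure OrdModule (V : VOA) extends GenModule V where
  wt_fd : ∀ h : ℂ, FiniteDimensional ℂ ↥(wt h)
  wt_lower : ∀ h : ℂ, ∃ N : ℤ, ∀ m : ℤ, m ≤ N → wt (h + (m : ℂ)) = ⊥

namespace GenModule

variable {V : VOA} (W : GenModule V)

/-- `W₊ = ⊕_{Re h > 0} W₍ₕ₎`. -/
def posW : Submodule ℂ W.carrier := ⨆ (h : ℂ) (_ : 0 < h.re), W.wt h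

/-- `C₁(W) = span(v₋₁W₊ (v ∈ V₊) together with L(-1)W)`. -/
def C1W : Submodule ℂ W.carrier :=
  Submodule.span ℂ
    ({x : W.carrier | ∃ v ∈ V.pos, ∃ w ∈ W.posW, x = W.op v (-1) w}
      ∪ {x : W.carrier | ∃ w : W.carrier, x = W.op V.omega 0 w})

/-- The restricted dual `W' = ⊕ₕ W₍ₕ₎* ⊆ W*`: the linear functionals vanishing on all
but finitely many weight spaces. -/
def restrictedDual : Set (W.carrier → ℂ) :=
  {α | IsLinearMap ℂ α ∧ {h : ℂ | ∃ w ∈ W.wt h, α w ≠ 0}.Finite}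

end GenModule

/-- `D(W)⁰`: the sum of the `L(0)`-eigenspaces of the weak module `D(W) ⊆ W*`, where
`L*(0) = ω*₁` acts on `α ∈ W*` by `(L*(0)α)(w) = α(L(0)w)`. -/
def OrdModule.DW0 {V : VOA} (W : OrdModule V) : Set (W.carrier → ℂ) :=
  {α | ∃ (S : Finset ℂ) (f : ℂ → (W.carrier → ℂ)),
    (∀ h ∈ S, f h ∈ W.toWeakModule.DW ∧
      ∀ w : W.carrier, f h (W.op V.omega 1 w) = h * f h w) ∧
    α = ∑ h ∈ S, f h}

/-- An ℕ-gradable weak `V`-module: a weak module with an ℕ-grading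
`W = ⊕_{n∈ℕ} W(n)` with `v_m W(n) ⊆ W(wt v + n - m - 1)` (graded pieces of negative
index are zero). -/
structure NGradedModule (V : VOA) extends WeakModule V where
  gr : ℤ → Submodule ℂ carrier
  gr_neg : ∀ n : ℤ, n < 0 → gr n = ⊥
  gr_sup : (⨆ n : ℤ, gr n) = ⊤
  gr_indep : ∀ n : ℤ, Disjoint (gr n) (⨆ (m : ℤ) (_ : m ≠ n), gr m)
  gr_op : ∀ k : ℤ, ∀ v ∈ V.wtSpace k, ∀ m n : ℤ, ∀ w ∈ gr n,
    op v m w ∈ gr (k + n - m - 1)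

/-- An intertwining operator of type `(W₃; W₁ W₂)` in the sense of
Frenkel–Huang–Lepowsky, recorded through its complex-indexed modes
`I w₁ h w₂ = (w₁)ₕ w₂` (so `Y(w₁,x)w₂ = Σ_{h∈ℂ} (w₁)ₕ w₂ x^{-h-1}`):
linearity, truncation, the `L(-1)`-derivative property, and the Jacobi identity in
component (Borcherds) form. -/
def IsIntertwiner {V : VOA} (W1 W2 W3 : OrdModule V)
    (I : W1.carrier → ℂ → W2.carrier → W3.carrier) : Prop :=
  (∀ (h : ℂ) (w2 : W2.carrier), IsLinearMap ℂ fun w1 => I w1 h w2) ∧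
  (∀ (w1 : W1.carrier) (h : ℂ), IsLinearMap ℂ (I w1 h)) ∧
  (∀ (w1 : W1.carrier) (w2 : W2.carrier) (h : ℂ),
    ∃ N : ℤ, ∀ n : ℤ, N ≤ n → I w1 (h + (n : ℂ)) w2 = 0) ∧
  (∀ (w1 : W1.carrier) (h : ℂ) (w2 : W2.carrier),
    I (W1.op V.omega 0 w1) h w2 = (-h) • I w1 (h - 1) w2) ∧
  (∀ (u : V.carrier) (w1 : W1.carrier) (w2 : W2.carrier) (l m : ℤ) (h : ℂ),
    (∑ᶠ i : ℕ, cchoose m i • I (W1.op u (l + (i : ℤ)) w1) ((m : ℂ) + h - (i : ℂ)) w2)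
      = ∑ᶠ i : ℕ, ((-1 : ℂ) ^ i * cchoose l i) •
          (W3.op u (l + m - (i : ℤ)) (I w1 (h + (i : ℂ)) w2)
            - ((-1 : ℂ) ^ l) • I w1 ((l : ℂ) + h - (i : ℂ)) (W2.op u (m + (i : ℤ)) w2)))

/-- The fusion rule `dim I(W₃; W₁W₂)` is finite: the space of intertwining operators of
the indicated type is finite-dimensional. -/
def FusionFinite {V : VOA} (W1 W2 W3 : OrdModule V) : Prop :=
  FiniteDimensional ℂ
    ↥(Submodule.span ℂ {I : W1.carrier → ℂ → W2.carrier → W3.carrier |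
        IsIntertwiner W1 W2 W3 I})

end

/-!
For a subspace `K` of `W`, consider the vectors `v ∈ V` with `v_m W ⊆ K` for all `m ≪ 0`.  By the
commutator and iterate forms of the Borcherds identity, if `u`, `y` and all `u_j y` with `j ≥ 0` are
such vectors, then so is every `u_p y`.  When `u` has nonnegative weight and `p < 0`, the vectors
`u_j y` have smaller weight than `u_p y`, and `y` has at most the weight of `u_p y` while being
built from one generator fewer.  So an induction on the weight, and within each weight on the number
of generators, shows that all of `V` consists of such vectors as soon as a strongly generating set
does.  Taking `K = ker α` gives the theorem, because `v*_n α` involves only the finitely many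
nonzero vectors among the `L(1)^i v`.
-/

theorem cchoose_zero_right (m : ℤ) : cchoose m 0 = 1 := by
  simp [cchoose]

theorem cchoose_zero_left {i : ℕ} (hi : i ≠ 0) : cchoose 0 i = 0 := by
  have : ∏ j ∈ Finset.range i, (((0 : ℤ) : ℂ) - (j : ℂ)) = 0 :=
    Finset.prod_eq_zero (Finset.mem_range.2 (Nat.pos_of_ne_zero hi)) (by simp)
  rw [cchoose, this, zero_div]

theorem finsum_mem_of_forall_mem {ι M S : Type*} [AddCommMonoid M] [SetLike S M]
    [AddSubmonoidClass S M] (T : S) {f : ι → M} (h : ∀ i, f i ∈ T) : ∑ᶠ i, f i ∈ T :=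
  finsum_induction (· ∈ T) (zero_mem T) (fun _ _ => add_mem) h

theorem eventually_forall_of_cofinite {ι β : Type*} {l : Filter β} {p : ι → β → Prop}
    (h : ∀ i, ∀ᶠ x in l, p i x) (hp : ∀ᶠ i in Filter.cofinite, ∀ x, p i x) :
    ∀ᶠ x in l, ∀ i, p i x := by
  have hfin := (Filter.eventually_all_finite hp).2 fun i _ => h i
  filter_upwards [hfin] with x hx i
  by_cases hi : ∀ x, p i x
  · exact hi x
  · exact hx i hi

namespace VOA

open Filter

variable (V : VOA)

/-- `U` strongly generates `V`: the vectors `u¹_{-n₁} ⋯ uʳ_{-n_r} 1` with `uⁱ ∈ U`, `nᵢ ≥ 1` and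
`r ≥ 0` span `V`.  Unlike in `VOA.generates`, only negative modes are allowed. -/
def StronglyGenerates (U : Set V.carrier) : Prop :=
  Submodule.span ℂ {x : V.carrier | ∃ l : List (V.carrier × ℤ),
    (∀ p ∈ l, p.1 ∈ U ∧ p.2 ≤ -1) ∧ x = V.iterApply l V.one} = ⊤

variable {V}

theorem map_mem_of_forall_map_proj_mem {M : Type*} [AddCommGroup M] [Module ℂ M]
    (f : V.carrier →ₗ[ℂ] M) (T : Submodule ℂ M) {v : V.carrier}
    (h : ∀ n, f (V.proj n v) ∈ T) : f v ∈ T := by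
  have hsum : ∑ᶠ n, V.proj n v ∈ T.comap f := finsum_mem_of_forall_mem _ h
  rwa [V.proj_sum] at hsum

theorem proj_op_mem (T : Submodule ℂ V.carrier) {u y : V.carrier} {p n : ℤ}
    (h : ∀ a b : ℤ, a + b - p - 1 = n → V.op (V.proj a u) p (V.proj b y) ∈ T) :
    V.proj n (V.op u p y) ∈ T := by
  let projₗ := (V.proj_linear n).mk'
  refine map_mem_of_forall_map_proj_mem (projₗ ∘ₗ (V.op_linear_left p y).mk') T fun a => ?_
  refine map_mem_of_forall_map_proj_mem (projₗ ∘ₗ (V.op_linear_right (V.proj a u) p).mk') T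
    fun b => ?_
  change V.proj n (V.op (V.proj a u) p (V.proj b y)) ∈ T
  have hwt := V.op_wt a b p _ (V.proj_mem a u) _ (V.proj_mem b y)
  by_cases hn : a + b - p - 1 = n
  · rw [V.proj_eq n _ (hn ▸ hwt)]
    exact h a b hn
  · rw [V.proj_ne _ n hn _ hwt]
    exact T.zero_mem

theorem L_one_iterate_mem_wtSpace {h : ℤ} {v : V.carrier} (hv : v ∈ V.wtSpace h) (i : ℕ) :
    (V.L 1)^[i] v ∈ V.wtSpace (h - i) := by
  induction i with
  | zero => simpa using hv
  | succ i ih =>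
    rw [Function.iterate_succ_apply']
    have hL : V.L 1 ((V.L 1)^[i] v) ∈ V.wtSpace (2 + (h - i) - (1 + 1) - 1) :=
      V.op_wt 2 (h - i) (1 + 1) _ V.omega_wt _ ih
    convert hL using 2
    push_cast
    ring

theorem eventually_L_one_iterate_eq_zero {h : ℤ} {v : V.carrier} (hv : v ∈ V.wtSpace h) :
    ∀ᶠ i : ℕ in atTop, (V.L 1)^[i] v = 0 := by
  obtain ⟨N, hN⟩ := V.lower_trunc
  filter_upwards [eventually_gt_atTop (h - N).toNat] with i hi
  have hmem := L_one_iterate_mem_wtSpace hv i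
  rwa [hN _ (by omega), Submodule.mem_bot] at hmem

section StrongGeneration

variable {U : Set V.carrier} (hUgraded : ∀ u ∈ U, ∀ n : ℤ, V.proj n u ∈ U)
  (hUnonneg : ∀ u ∈ U, ∀ n : ℤ, n < 0 → V.proj n u = 0)
  {T : Submodule ℂ V.carrier} (hone : V.one ∈ T)
  (hT : ∀ u ∈ U, ∀ y ∈ T, (∀ j : ℕ, V.op u j y ∈ T) → ∀ p : ℤ, p ≤ -1 → V.op u p y ∈ T)
include hUgraded hUnonneg hone hT

theorem proj_iterApply_mem {n : ℤ} (hlt : ∀ m < n, V.wtSpace m ≤ T)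
    {l : List (V.carrier × ℤ)} (hl : ∀ p ∈ l, p.1 ∈ U ∧ p.2 ≤ -1) :
    V.proj n (V.iterApply l V.one) ∈ T := by
  induction l with
  | nil =>
    rw [iterApply]
    obtain rfl | hn := eq_or_ne 0 n
    · rwa [V.proj_eq 0 _ V.one_wt]
    · rw [V.proj_ne 0 n hn _ V.one_wt]
      exact T.zero_mem
  | cons q l ih =>
    obtain ⟨u, p⟩ := q
    obtain ⟨⟨hu, hp⟩, htail⟩ := List.forall_mem_cons.1 hl
    rw [iterApply]
    set y := V.iterApply l V.one
    refine proj_op_mem T fun a b hab => ?_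
    obtain ha | ha := lt_or_ge a 0
    · rw [hUnonneg u hu a ha, (V.op_linear_left p _).map_zero]
      exact T.zero_mem
    have hy : V.proj b y ∈ T := by
      obtain hb | rfl : b < n ∨ b = n := by omega
      · exact hlt b hb (V.proj_mem b y)
      · exact ih htail
    have hnonneg (j : ℕ) : V.op (V.proj a u) j (V.proj b y) ∈ T :=
      hlt (a + b - j - 1) (by omega) (V.op_wt a b j _ (V.proj_mem a u) _ (V.proj_mem b y))
    exact hT _ (hUgraded u hu a) _ hy hnonneg p hp

theorem StronglyGenerates.eq_top (hU : V.StronglyGenerates U) : T = ⊤ := by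
  rw [StronglyGenerates] at hU
  have hproj {n : ℤ} (hlt : ∀ m < n, V.wtSpace m ≤ T) (v : V.carrier) : V.proj n v ∈ T := by
    have hle : (⊤ : Submodule ℂ V.carrier) ≤ T.comap (V.proj_linear n).mk' := by
      rw [← hU, Submodule.span_le]
      rintro _ ⟨l, hl, rfl⟩
      exact proj_iterApply_mem hUgraded hUnonneg hone hT hlt hl
    exact hle Submodule.mem_top
  obtain ⟨N, hN⟩ := V.lower_trunc
  have hwt (n : ℤ) : V.wtSpace n ≤ T := by
    induction n using Int.strongRec (m := N) with
    | lt n hn => exact (hN n hn).trans_le bot_le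
    | ge n _ ih => exact fun v hv => V.proj_eq n v hv ▸ hproj ih v
  exact eq_top_iff.2 fun v _ =>
    map_mem_of_forall_map_proj_mem LinearMap.id T fun n => hwt n (V.proj_mem n v)

end StrongGeneration

end VOA

namespace WeakModule

open Filter

variable {V : VOA} (W : WeakModule V)

theorem zero_op (n : ℤ) (w : W.carrier) : W.op 0 n w = 0 :=
  (W.op_linear_left n w).map_zero

theorem op_commutator (u v : V.carrier) (w : W.carrier) (m n : ℤ) :
    W.op u m (W.op v n w) - W.op v n (W.op u m w)
      = ∑ᶠ i : ℕ, cchoose m i • W.op (V.op u i v) (m + n - i) w := by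
  have hB := (W.borcherds u v w 0 m n).trans <| finsum_eq_single _ 0 fun i hi => by
    rw [cchoose_zero_left hi, mul_zero, zero_smul]
  simpa [cchoose_zero_right] using hB.symm

theorem op_iterate (u v : V.carrier) (w : W.carrier) (l n : ℤ) :
    W.op (V.op u l v) n w
      = ∑ᶠ i : ℕ, ((-1 : ℂ) ^ i * cchoose l i) •
          (W.op u (l - i) (W.op v (n + i) w)
            - ((-1 : ℂ) ^ l) • W.op v (l + n - i) (W.op u i w)) := by
  have hB := W.borcherds u v w l 0 n
  rw [finsum_eq_single _ 0 fun i hi => by rw [cchoose_zero_left hi, zero_smul]] at hB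
  simpa only [cchoose_zero_right, one_smul, Nat.cast_zero, sub_zero, add_zero, zero_add] using hB

/-- The vectors `v ∈ V` such that `v_m W ⊆ K` for all sufficiently negative `m`.  For `K = ker α`
these are the vectors whose sufficiently negative modes are annihilated by `α`. -/
def absorbedBy (K : Submodule ℂ W.carrier) : Submodule ℂ V.carrier where
  carrier := {v | ∀ᶠ m in atBot, ∀ w, W.op v m w ∈ K}
  zero_mem' := .of_forall fun m w => by
    rw [W.zero_op]
    exact K.zero_mem
  add_mem' ha hb := by
    filter_upwards [ha, hb] with m ham hbm w
    rw [(W.op_linear_left m w).map_add]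
    exact K.add_mem (ham w) (hbm w)
  smul_mem' c v hv := by
    filter_upwards [hv] with m hm w
    rw [(W.op_linear_left m w).map_smul]
    exact K.smul_mem c (hm w)

variable {W} {K : Submodule ℂ W.carrier}

theorem one_mem_absorbedBy : V.one ∈ W.absorbedBy K := by
  filter_upwards [eventually_lt_atBot (-1)] with m hm w
  rw [W.one_op, if_neg hm.ne]
  exact K.zero_mem

theorem eventually_op_op_mem {u y : V.carrier} (hy : y ∈ W.absorbedBy K)
    (huy : ∀ j : ℕ, V.op u j y ∈ W.absorbedBy K) (a : ℤ) :
    ∀ᶠ b in atBot, ∀ w, W.op u a (W.op y b w) ∈ K := by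
  have hterms : ∀ᶠ b in atBot, ∀ (i : ℕ) w, W.op (V.op u i y) (a + b - i) w ∈ K := by
    refine eventually_forall_of_cofinite (fun i => ?_) ?_
    · have hshift : Tendsto (fun b : ℤ => a + b - i) atBot atBot :=
        tendsto_atBot_atBot.2 fun k => ⟨k + i - a, fun _ _ => by omega⟩
      exact hshift.eventually (huy i)
    · obtain ⟨J, hJ⟩ := V.trunc u y
      rw [Nat.cofinite_eq_atTop]
      filter_upwards [eventually_ge_atTop J.toNat] with i hi b w
      rw [hJ i (by omega), W.zero_op]
      exact K.zero_mem
  filter_upwards [hterms, hy] with b hb hyb w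
  rw [← sub_add_cancel (W.op u a _) (W.op y b (W.op u a w)), op_commutator]
  exact K.add_mem (finsum_mem_of_forall_mem K fun i => K.smul_mem _ (hb i w)) (hyb _)

theorem op_mem_absorbedBy {u y : V.carrier} (hu : u ∈ W.absorbedBy K) (hy : y ∈ W.absorbedBy K)
    (huy : ∀ j : ℕ, V.op u j y ∈ W.absorbedBy K) (p : ℤ) : V.op u p y ∈ W.absorbedBy K := by
  have hleft : ∀ᶠ n in atBot, ∀ (i : ℕ) w, W.op u (p - i) (W.op y (n + i) w) ∈ K := by
    refine eventually_forall_of_cofinite (fun i => ?_) ?_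
    · exact (tendsto_atBot_add_const_right atBot (i : ℤ) tendsto_id).eventually
        (eventually_op_op_mem hy huy (p - i))
    · have hshift : Tendsto (fun i : ℕ => p - i) atTop atBot :=
        tendsto_atTop_atBot.2 fun k => ⟨(p - k).toNat, fun _ _ => by omega⟩
      rw [Nat.cofinite_eq_atTop]
      filter_upwards [hshift.eventually hu] with i hi n w using hi _
  have hright : ∀ᶠ n in atBot, ∀ (i : ℕ) w, W.op y (p + n - i) (W.op u i w) ∈ K := by
    obtain ⟨k, hk⟩ := eventually_atBot.1 hy
    filter_upwards [eventually_le_atBot (k - p)] with n hn i w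
    exact hk _ (by omega) _
  filter_upwards [hleft, hright] with n hleft hright w
  rw [op_iterate]
  exact finsum_mem_of_forall_mem K fun i =>
    K.smul_mem _ (K.sub_mem (hleft i w) (K.smul_mem _ (hright i _)))

theorem absorbedBy_eq_top {U : Set V.carrier} (hUgraded : ∀ u ∈ U, ∀ n : ℤ, V.proj n u ∈ U)
    (hUnonneg : ∀ u ∈ U, ∀ n : ℤ, n < 0 → V.proj n u = 0) (hgen : V.StronglyGenerates U)
    (hU : U ⊆ W.absorbedBy K) : W.absorbedBy K = ⊤ :=
  hgen.eq_top hUgraded hUnonneg one_mem_absorbedBy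
    fun _ hu _ hy huy p _ => op_mem_absorbedBy (hU hu) hy huy p

theorem mem_DW_of_absorbedBy_ker_eq_top {α : W.carrier →ₗ[ℂ] ℂ}
    (h : W.absorbedBy (LinearMap.ker α) = ⊤) : ⇑α ∈ W.DW := by
  refine ⟨α.isLinear, fun v => eventually_atTop.1 ?_⟩
  have hterms : ∀ᶠ n : ℤ in atTop, ∀ (k : ℤ) (i : ℕ) w,
      α (W.op ((V.L 1)^[i] (V.proj k v)) (2 * k - n - i - 2) w) = 0 := by
    refine eventually_forall_of_cofinite
      (fun k => eventually_forall_of_cofinite (fun i => ?_) ?_) ?_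
    · have hshift : Tendsto (fun n : ℤ => 2 * k - n - i - 2) atTop atBot :=
        tendsto_atTop_atBot.2 fun m => ⟨2 * k - i - 2 - m, fun _ _ => by omega⟩
      have habs : (V.L 1)^[i] (V.proj k v) ∈ W.absorbedBy (LinearMap.ker α) :=
        h ▸ Submodule.mem_top
      exact hshift.eventually habs
    · rw [Nat.cofinite_eq_atTop]
      filter_upwards [VOA.eventually_L_one_iterate_eq_zero (V.proj_mem k v)] with i hi n w
      rw [hi, W.zero_op, map_zero]
    · have hL (i : ℕ) : (V.L 1)^[i] 0 = 0 :=
        Function.iterate_fixed (V.op_linear_right V.omega (1 + 1)).map_zero i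
      filter_upwards [show ∀ᶠ k in cofinite, ¬V.proj k v ≠ 0 from
        (V.proj_finite v).eventually_cofinite_notMem] with k hk n i w
      rw [not_not.1 hk, hL, W.zero_op, map_zero]
  filter_upwards [hterms] with n hn w
  simp only [dmode, hn, mul_zero, finsum_zero]

end WeakModule

theorem mem_DW_of_generators_general (V : VOA) (U : Set V.carrier)
    (hUgraded : ∀ u ∈ U, ∀ n : ℤ, V.proj n u ∈ U)
    (hUnonneg : ∀ u ∈ U, ∀ n : ℤ, n < 0 → V.proj n u = 0)
    (hgen : V.StronglyGenerates U)
    (W : WeakModule V) (α : W.carrier → ℂ) (hα : IsLinearMap ℂ α)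
    (hU : ∀ u ∈ U, ∃ k : ℤ, ∀ m : ℤ, m ≤ k → ∀ w : W.carrier, α (W.op u m w) = 0) :
    α ∈ W.DW :=
  WeakModule.mem_DW_of_absorbedBy_ker_eq_top (α := hα.mk') <|
    WeakModule.absorbedBy_eq_top hUgraded hUnonneg hgen
      fun u hu => Filter.eventually_atBot.2 (hU u hu)

/-- Suppose `V = ⊕_{n≥0} V₍ₙ₎` with `V₍₀₎ = ℂ1` and `U` is a graded
subspace of `⊕_{n≥1} V₍ₙ₎` such that `V` is linearly spanned by `1` together with the
elements `u¹_{-n₁} ⋯ uʳ_{-n_r} 1` (`uⁱ ∈ U`, `nᵢ ≥ 1`).  If `α ∈ W*` is a linear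
functional on a weak `V`-module `W` such that for every `u ∈ U` there is `k ∈ ℤ` with
`⟨α, uₘw⟩ = 0` for all `w ∈ W` and `m ≤ k`, then `α ∈ D(W)`. -/
theorem mem_DW_of_generators (V : VOA)
    (hneg : ∀ n : ℤ, n < 0 → V.wtSpace n = ⊥)
    (h0 : V.wtSpace 0 = Submodule.span ℂ {V.one})
    (U : Submodule ℂ V.carrier)
    (hUgraded : ∀ u ∈ U, ∀ n : ℤ, V.proj n u ∈ U)
    (hUpos : ∀ u ∈ U, ∀ n : ℤ, n ≤ 0 → V.proj n u = 0)
    (hspan : Submodule.span ℂ {x : V.carrier | ∃ l : List (V.carrier × ℤ),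
        (∀ p ∈ l, p.1 ∈ U ∧ p.2 ≤ -1) ∧ x = V.iterApply l V.one} = ⊤)
    (W : WeakModule V) (α : W.carrier → ℂ) (hα : IsLinearMap ℂ α)
    (hU : ∀ u ∈ U, ∃ k : ℤ, ∀ m : ℤ, m ≤ k → ∀ w : W.carrier, α (W.op u m w) = 0) :
    α ∈ W.DW :=
  mem_DW_of_generators_general V U hUgraded (fun u hu n hn => hUpos u hu n hn.le) hspan W α hα hU
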